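/- Let α be a type and let A, B be lists over α, both of length ℓ. Then for every k ≥ 1, the length of S_{A,B}(a(k)) satisfies |S(a(k))| = ℓ · d(k), where d is Stern's diatomic sequence. (In particular, for ℓ = 2 this is |S(a(k))| = 2 d_k.) -/

import Mathlib

/-- Stern's diatomic sequence. -/
def stern : ℕ → ℕ
  | 0 => 0
  | 1 => 1
  | n + 2 =>
    if (n + 2) % 2 = 0 then stern ((n + 2) / 2)
    else stern ((n + 2) / 2) + stern ((n + 2) / 2 + 1)
decreasing_by all_goals omega

/-- OEIS A003602: a(1)=1, a(2n)=a(n), a(2n+1)=n+1. (a(0)=0 as junk value.) -/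
def aseq : ℕ → ℕ
  | 0 => 0
  | 1 => 1
  | n + 2 =>
    if (n + 2) % 2 = 0 then aseq ((n + 2) / 2)
    else (n + 2) / 2 + 1
decreasing_by all_goals omega

-- the modified sequence `a*`: zero at powers of two.
open Classical in
noncomputable def aStar (j : ℕ) : ℕ :=
  if ∃ k, j = 2 ^ k then 0 else aseq j

theorem aseq_le (n : ℕ) : aseq n ≤ n := by
  induction n using Nat.strong_induction_on with
  | _ n ih =>
    match n with
    | 0 => simp [aseq]
    | 1 => simp [aseq]
    | m + 2 =>
      rw [aseq]
      split
      · exact le_trans (ih ((m + 2) / 2) (by omega)) (by omega)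
      · omega

theorem aStar_le (j : ℕ) : aStar j ≤ j := by
  unfold aStar
  split
  · omega
  · exact aseq_le j

/-- The Markov-type sequence `S_{A,B}(n)`. -/
noncomputable def mseq {α : Type*} (A B : List α) : ℕ → List α
  | 0 => A
  | 1 => B
  | 2 => A ++ B
  | n + 3 =>
    if (n + 3) % 2 = 0 then
      mseq A B ((n + 3) / 2) ++ mseq A B (aseq ((n + 3) / 2))
    else
      mseq A B (aStar ((n + 4) / 2 - 1)) ++ mseq A B ((n + 4) / 2)
decreasing_by
  all_goals first
    | omega
    | exact lt_of_le_of_lt (aseq_le _) (by omega)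
    | exact lt_of_le_of_lt (aStar_le _) (by omega)

theorem stern_even (n : ℕ) (hn : 1 ≤ n) : stern (2 * n) = stern n := by
  obtain ⟨m, rfl⟩ : ∃ m, n = m + 1 := ⟨n - 1, by omega⟩
  rw [show 2 * (m + 1) = 2 * m + 2 by ring, stern, if_pos (by omega)]
  congr 1; omega

theorem stern_odd (n : ℕ) (hn : 1 ≤ n) : stern (2 * n + 1) = stern n + stern (n + 1) := by
  obtain ⟨m, rfl⟩ : ∃ m, n = m + 1 := ⟨n - 1, by omega⟩
  rw [show 2 * (m + 1) + 1 = (2 * m + 1) + 2 by ring, stern, if_neg (by omega),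
    show (2 * m + 1 + 2) / 2 = m + 1 by omega]

theorem aseq_even (n : ℕ) (hn : 1 ≤ n) : aseq (2 * n) = aseq n := by
  obtain ⟨m, rfl⟩ : ∃ m, n = m + 1 := ⟨n - 1, by omega⟩
  rw [show 2 * (m + 1) = 2 * m + 2 by ring, aseq, if_pos (by omega)]
  congr 1; omega

theorem aseq_odd (n : ℕ) : aseq (2 * n + 1) = n + 1 := by
  rcases n with _ | m
  · simp [aseq]
  · rw [show 2 * (m + 1) + 1 = (2 * m + 1) + 2 by ring, aseq, if_neg (by omega)]
    omega

theorem stern_pow (k : ℕ) : stern (2 ^ k) = 1 := by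
  induction k with
  | zero => simp [stern]
  | succ k ih => rw [pow_succ', stern_even _ Nat.one_le_two_pow, ih]

theorem mseq_even {α : Type*} (A B : List α) (j : ℕ) :
    mseq A B (2 * (j + 2)) = mseq A B (j + 2) ++ mseq A B (aseq (j + 2)) := by
  rw [show 2 * (j + 2) = (2 * j + 1) + 3 by ring, mseq, if_pos (by omega),
    show (2 * j + 1 + 3) / 2 = j + 2 by omega]

theorem mseq_odd {α : Type*} (A B : List α) (j : ℕ) :
    mseq A B (2 * j + 3) = mseq A B (aStar (j + 1)) ++ mseq A B (j + 2) := by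
  rw [mseq, if_neg (by omega),
    show (2 * j + 4) / 2 = j + 2 by omega]
  rfl

/-- if `A` and `B` both have length `ℓ`, then for every `k ≥ 1`,
`|S(a(k))| = ℓ · d(k)`. -/
theorem stmt6 {α : Type*} (A B : List α) (ℓ : ℕ) (hA : A.length = ℓ) (hB : B.length = ℓ)
    (k : ℕ) (hk : 1 ≤ k) :
    (mseq A B (aseq k)).length = ℓ * stern k := by
  induction k using Nat.strong_induction_on with
  | _ k ih =>
    obtain ⟨n, rfl | rfl⟩ : ∃ n, k = 2 * n ∨ k = 2 * n + 1 := ⟨k / 2, by omega⟩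
    · rw [aseq_even n (by omega), stern_even n (by omega)]
      exact ih n (by omega) (by omega)
    · rcases Nat.eq_zero_or_pos n with rfl | hn
      · simp [aseq, stern, mseq, hB]
      rw [aseq_odd, stern_odd n hn]
      obtain ⟨j, rfl | rfl⟩ : ∃ j, n = 2 * j + 1 ∨ n = 2 * j + 2 := ⟨(n - 1) / 2, by omega⟩
      · rcases j with _ | j
        · simp [mseq, stern, hA, hB]
          ring
        · have h1 := ih (2 * (j + 1) + 1) (by omega) (by omega)
          have h2 := ih (j + 2) (by omega) (by omega)
          rw [aseq_odd] at h1
          rw [show 2 * (j + 1) + 1 + 1 = 2 * (j + 2) by ring, mseq_even, List.length_append,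
            stern_even (j + 2) (by omega), h2, h1]
          ring
      · have h1 := ih (2 * (j + 1) + 1) (by omega) (by omega)
        have h2 := ih (j + 1) (by omega) (by omega)
        rw [aseq_odd] at h1
        have h3 : (mseq A B (aStar (j + 1))).length = ℓ * stern (j + 1) := by
          unfold aStar
          split
          · rename_i h
            obtain ⟨k, hk⟩ := h
            rw [hk, stern_pow]
            simp [mseq, hA]
          · exact h2
        rw [show 2 * j + 2 + 1 = 2 * j + 3 by ring, mseq_odd, List.length_append, h3, h1,
          show 2 * j + 2 = 2 * (j + 1) by ring, stern_even (j + 1) (by omega),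
          show 2 * (j + 1) + 1 = 2 * j + 3 by ring]
        ring
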